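/- (Extended validity of the RBBG formula, Pfaff-transformed branch.) Let p*_ℓ := (√(3+2√3) − 1)/2. For every real p with −1/2 < p < p*_ℓ, one has ₂F₁(1/3, 2/3; 1; β(p)) = γ_ℓ(p) · ₂F₁(1/2, 1/2; 1; α_ℓ(p)). (For such p one has −1 < α_ℓ(p) < 1 and 0 ≤ β(p) < 1, so both hypergeometric series converge absolutely.) -/

import Mathlib

open Real

/-- Gauss hypergeometric function ₂F₁ defined via its power series
    (the tsum; converges absolutely for |z| < 1). -/
noncomputable def hyp2F1 (a b c z : ℝ) : ℝ :=
  ∑' n : ℕ, ((ascPochhammer ℝ n).eval a * (ascPochhammer ℝ n).eval b /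
      (ascPochhammer ℝ n).eval c) * z ^ n / (Nat.factorial n)

noncomputable def β (p : ℝ) : ℝ := 27 * p ^ 2 * (1 + p) ^ 2 / (4 * (1 + p + p ^ 2) ^ 3)

noncomputable def αℓ (p : ℝ) : ℝ := -(p ^ 3 * (2 + p)) / ((1 - p ^ 2) * (1 + p) ^ 2)

noncomputable def γℓ (p : ℝ) : ℝ := (1 + p + p ^ 2) / ((1 + p) * Real.sqrt (1 - p ^ 2))

noncomputable def pStarℓ : ℝ := (Real.sqrt (3 + 2 * Real.sqrt 3) - 1) / 2


/-- Termwise differentiation of a power series with bounded coefficients. -/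
lemma ps_hasDerivAt (c : ℕ → ℝ) (hc : ∀ n, |c n| ≤ 1) (z : ℝ) (hz : |z| < 1) :
    HasDerivAt (fun w : ℝ => ∑' n : ℕ, c n * w ^ n) (∑' n : ℕ, c n * (n * z ^ (n - 1))) z := by
  obtain ⟨r, hzr, hr1⟩ := exists_between hz
  have hr0 : 0 < r := lt_of_le_of_lt (abs_nonneg z) hzr
  have hs : Summable (fun n : ℕ => (n : ℝ) * r ^ (n - 1)) := by
    have h := summable_pow_mul_geometric_of_norm_lt_one (R := ℝ) 1 (r := r)
      (by rw [Real.norm_eq_abs, abs_of_pos hr0]; exact hr1)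
    refine (h.mul_left r⁻¹).congr ?_
    intro n
    rcases n with _ | n
    · simp
    · simp only [Nat.add_sub_cancel, pow_succ]
      field_simp
      try ring
  refine hasDerivAt_tsum_of_isPreconnected (t := Metric.ball (0 : ℝ) r) (y₀ := 0)
    (g := fun n w => c n * w ^ n) (g' := fun n w => c n * (n * w ^ (n - 1))) hs Metric.isOpen_ball
    (convex_ball (0 : ℝ) r).isPreconnected ?_ ?_ (by simpa using hr0) ?_ (by simpa using hzr)
  · intro n y _
    exact (hasDerivAt_pow n y).const_mul (c n)
  · intro n y hy
    have hy' : |y| < r := by simpa using hy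
    rw [Real.norm_eq_abs, abs_mul, abs_mul, abs_pow, Nat.abs_cast]
    calc |c n| * (n * |y| ^ (n - 1)) ≤ 1 * (n * r ^ (n - 1)) := by
          gcongr
          exact hc n
      _ = _ := one_mul _
  · refine summable_of_ne_finset_zero (s := {0}) ?_
    intro n hn
    have : n ≠ 0 := by simpa using hn
    simp [this]

lemma ps_summable (c : ℕ → ℝ) (hc : ∀ n, |c n| ≤ 1) (z : ℝ) (hz : |z| < 1) :
    Summable (fun n : ℕ => c n * (n * z ^ (n - 1))) := by
  have h := summable_pow_mul_geometric_of_norm_lt_one (R := ℝ) 1 (r := |z|)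
      (by rw [Real.norm_eq_abs, abs_abs]; exact hz)
  have h0 := summable_geometric_of_lt_one (abs_nonneg z) hz
  rw [← summable_nat_add_iff 1]
  refine Summable.of_norm_bounded (h.add h0) ?_
  intro n
  rw [Real.norm_eq_abs, abs_mul, abs_mul, abs_pow, Nat.abs_cast]
  calc |c (n+1)| * (((n+1 : ℕ) : ℝ) * |z| ^ (n + 1 - 1)) ≤ 1 * (((n+1 : ℕ) : ℝ) * |z| ^ (n + 1 - 1)) := by
        gcongr
        exact hc _
    _ = _ := by simp; ring

lemma ps_summable' (c : ℕ → ℝ) (hc : ∀ n, |c n| ≤ 1) (z : ℝ) (hz : |z| < 1) :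
    Summable (fun n : ℕ => c n * z ^ n) := by
  have h0 := summable_geometric_of_lt_one (abs_nonneg z) hz
  refine Summable.of_norm_bounded h0 ?_
  intro n
  rw [Real.norm_eq_abs, abs_mul, abs_pow]
  calc |c n| * |z| ^ n ≤ 1 * |z| ^ n := by
        gcongr
        exact hc _
    _ = _ := one_mul _

/-- coefficients of the hypergeometric series -/
noncomputable def hc (a b : ℝ) (n : ℕ) : ℝ :=
  ((ascPochhammer ℝ n).eval a * (ascPochhammer ℝ n).eval b /
      (ascPochhammer ℝ n).eval 1) / (Nat.factorial n)

lemma hc_zero (a b : ℝ) : hc a b 0 = 1 := by simp [hc]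

lemma hc_succ (a b : ℝ) (hab : a + b = 1) (n : ℕ) :
    ((n : ℝ) + 1) ^ 2 * hc a b (n + 1) = (n * (n + 1) + a * b) * hc a b n := by
  have h1 : (Nat.factorial n : ℝ) ≠ 0 := by positivity
  have h2 : (n : ℝ) + 1 ≠ 0 := by positivity
  simp only [hc, ascPochhammer_succ_eval, ascPochhammer_eval_one, Nat.factorial_succ]
  have h3 : (1 : ℝ) + n ≠ 0 := by positivity
  push_cast
  obtain rfl : b = 1 - a := by linarith
  field_simp
  ring

lemma hc_bound (a b : ℝ) (ha : 0 < a) (hb : 0 < b) (hab : a + b = 1) (n : ℕ) :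
    0 ≤ hc a b n ∧ hc a b n ≤ 1 := by
  induction n with
  | zero => simp [hc_zero]
  | succ n ih =>
    have h := hc_succ a b hab n
    have hn : (0 : ℝ) ≤ n := by positivity
    have hab1 : a * b ≤ 1 := by nlinarith
    have hpos : (0 : ℝ) < ((n : ℝ) + 1) ^ 2 := by positivity
    have hq : 0 ≤ (n * (n + 1) + a * b : ℝ) := by positivity
    have hq' : (n * (n + 1) + a * b : ℝ) ≤ ((n : ℝ) + 1) ^ 2 := by nlinarith
    constructor
    · by_contra hneg
      push Not at hneg
      nlinarith [mul_nonneg hq ih.1, mul_neg_of_pos_of_neg hpos hneg]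
    · refine le_of_mul_le_mul_left ?_ hpos
      rw [h, mul_one]
      nlinarith [mul_le_mul_of_nonneg_left ih.2 hq]

lemma hyp_eq (a b z : ℝ) : hyp2F1 a b 1 z = ∑' n, hc a b n * z ^ n := by
  unfold hyp2F1 hc
  refine tsum_congr fun n => ?_
  ring

/-- The self-adjoint form of the hypergeometric equation for `a + b = 1`, `c = 1`. -/
lemma hyp_ode (a b : ℝ) (ha : 0 < a) (hb : 0 < b) (hab : a + b = 1) :
    ∃ D Φ : ℝ → ℝ, ∀ z, |z| < 1 → HasDerivAt (hyp2F1 a b 1) (D z) z ∧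
      HasDerivAt Φ (a * b * hyp2F1 a b 1 z) z ∧ Φ z = z * (1 - z) * D z := by
  have hcb : ∀ n, |hc a b n| ≤ 1 := fun n => by
    have := hc_bound a b ha hb hab n
    rw [abs_of_nonneg this.1]; exact this.2
  let e : ℕ → ℝ := fun n => if n = 0 then 0 else a * b * hc a b (n - 1) / n
  have he1 : ∀ n : ℕ, ((n : ℝ) + 1) * e (n + 1) = a * b * hc a b n := by
    intro n
    have h2 : (n : ℝ) + 1 ≠ 0 := by positivity
    simp only [e]
    rw [if_neg (by omega)]
    push_cast
    try simp only [Nat.add_sub_cancel]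
    field_simp
  have he2 : ∀ n : ℕ, e (n + 1) = (n + 1) * hc a b (n + 1) - n * hc a b n := by
    intro n
    have h2 : (n : ℝ) + 1 ≠ 0 := by positivity
    apply mul_left_cancel₀ h2
    rw [he1]
    linear_combination -hc_succ a b hab n
  have heb : ∀ n, |e n| ≤ 1 := by
    intro n
    rcases n with _ | n
    · simp [e]
    · have h := he1 n
      have hb' := hc_bound a b ha hb hab n
      have hab1 : a * b ≤ 1 := by nlinarith
      have hab0 : 0 < a * b := by positivity
      have hn : (0 : ℝ) ≤ n := by positivity
      have hx : |((n : ℝ) + 1) * e (n + 1)| ≤ 1 := by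
        rw [h, abs_of_nonneg (by nlinarith [hb'.1, mul_nonneg hab0.le hb'.1])]
        nlinarith [mul_le_mul_of_nonneg_left hb'.2 hab0.le]
      rw [abs_mul, abs_of_pos (by positivity : (0 : ℝ) < (n : ℝ) + 1)] at hx
      nlinarith [abs_nonneg (e (n + 1))]
  refine ⟨fun z => ∑' n : ℕ, hc a b n * (n * z ^ (n - 1)), fun z => ∑' n : ℕ, e n * z ^ n, ?_⟩
  intro z hz
  refine ⟨?_, ?_, ?_⟩
  · have h := ps_hasDerivAt (hc a b) hcb z hz
    have hf : hyp2F1 a b 1 = fun w => ∑' n, hc a b n * w ^ n := funext fun w => hyp_eq a b w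
    rw [hf]; exact h
  · have h := ps_hasDerivAt e heb z hz
    convert h using 1
    rw [hyp_eq, ← tsum_mul_left, (ps_summable e heb z hz).tsum_eq_zero_add]
    simp only [Nat.cast_zero, zero_mul, mul_zero, zero_add, Nat.add_sub_cancel]
    refine tsum_congr fun n => ?_
    push_cast
    linear_combination -(z ^ n) * he1 n
  · have hs := ps_summable (hc a b) hcb z hz
    have hs1 : Summable (fun n : ℕ => hc a b (n + 1) * (((n + 1 : ℕ) : ℝ) * z ^ (n + 1 - 1))) :=
      (summable_nat_add_iff 1).2 hs
    have hE : ∑' n : ℕ, hc a b n * (n * z ^ (n - 1)) =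
        ∑' n : ℕ, hc a b (n + 1) * (((n + 1 : ℕ) : ℝ) * z ^ (n + 1 - 1)) := by
      rw [hs.tsum_eq_zero_add]; simp
    show ∑' n : ℕ, e n * z ^ n = z * (1 - z) * ∑' n : ℕ, hc a b n * (n * z ^ (n - 1))
    have hsplit : z * (1 - z) * ∑' n : ℕ, hc a b n * (n * z ^ (n - 1)) =
        z * (∑' n : ℕ, hc a b (n + 1) * (((n + 1 : ℕ) : ℝ) * z ^ (n + 1 - 1))) -
        z ^ 2 * ∑' n : ℕ, hc a b n * (n * z ^ (n - 1)) := by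
      rw [← hE]; ring
    rw [hsplit, ← tsum_mul_left, ← tsum_mul_left, ← (hs1.mul_left z).tsum_sub (hs.mul_left (z ^ 2)),
      (ps_summable' e heb z hz).tsum_eq_zero_add]
    have : e 0 = 0 := by simp [e]
    rw [this, zero_mul, zero_add]
    refine tsum_congr fun n => ?_
    rw [he2]
    rcases n with _ | n
    · simp; ring
    · simp only [Nat.add_sub_cancel]
      push_cast
      ring

lemma hyp_zero (a b : ℝ) : hyp2F1 a b 1 0 = 1 := by
  rw [hyp_eq, tsum_eq_single 0]
  · simp [hc_zero]
  · intro n hn; simp [hn]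

lemma hyp_pos (a b : ℝ) (ha : 0 < a) (hb : 0 < b) (hab : a + b = 1) (z : ℝ) (h0 : 0 ≤ z)
    (h1 : z < 1) : 0 < hyp2F1 a b 1 z := by
  have hcb : ∀ n, |hc a b n| ≤ 1 := fun n => by
    have := hc_bound a b ha hb hab n
    rw [abs_of_nonneg this.1]; exact this.2
  rw [hyp_eq]
  refine (ps_summable' _ hcb z (by rw [abs_of_nonneg h0]; exact h1)).tsum_pos ?_ 0 (by simp [hc_zero])
  intro n
  exact mul_nonneg (hc_bound a b ha hb hab n).1 (by positivity)

lemma interval_facts (p : ℝ) (hp0 : -(1/2) < p) (hp1 : p < pStarℓ) :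
    p < 1 ∧ 2 * p ^ 4 + 4 * p ^ 3 - 2 * p - 1 < 0 := by
  unfold pStarℓ at hp1
  set s := Real.sqrt 3 with hs
  have hs2 : s ^ 2 = 3 := Real.sq_sqrt (by norm_num)
  have hs0 : 0 ≤ s := Real.sqrt_nonneg _
  have ht : 2 * p + 1 < Real.sqrt (3 + 2 * s) := by linarith
  have ht2 : (2 * p + 1) ^ 2 < 3 + 2 * s := (Real.lt_sqrt (by linarith)).1 ht
  have hs3 : s < 2 := by nlinarith
  constructor
  · nlinarith
  · have h1 : 0 < (1 + s) / 2 - (p + p ^ 2) := by nlinarith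
    have h2 : 0 < (p + p ^ 2) + (s - 1) / 2 := by nlinarith [sq_nonneg (2 * p + 1)]
    nlinarith [mul_pos h1 h2]

lemma beta_bounds (p : ℝ) (hp0 : -(1/2) < p) (hp1 : p < 1) : 0 ≤ β p ∧ β p < 1 := by
  have hq : 0 < 1 + p + p ^ 2 := by nlinarith
  unfold β
  constructor
  · positivity
  · rw [div_lt_one (by positivity)]
    have h1 : 0 < (1 - p) * (2 + p) * (1 + 2 * p) :=
      mul_pos (mul_pos (by linarith) (by linarith)) (by linarith)
    nlinarith [pow_pos h1 2]

lemma alpha_bounds (p : ℝ) (hp0 : -(1/2) < p) (hp1 : p < 1)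
    (h : 2 * p ^ 4 + 4 * p ^ 3 - 2 * p - 1 < 0) : |αℓ p| < 1 := by
  have hq : 0 < (1 - p ^ 2) * (1 + p) ^ 2 :=
    mul_pos (by nlinarith) (pow_pos (by linarith) 2)
  unfold αℓ
  rw [abs_lt]
  constructor
  · rw [lt_div_iff₀ hq]; nlinarith
  · rw [div_lt_one hq]; nlinarith

lemma beta_deriv (p : ℝ) (hp0 : -(1/2) < p) :
    HasDerivAt β (27 / 4 * (p * (1 + p) * ((1 - p) * (2 + p)) * (1 + 2 * p)) / (1 + p + p ^ 2) ^ 4) p := by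
  have hq : 1 + p + p ^ 2 ≠ 0 := by nlinarith
  have hx := hasDerivAt_id' p
  have h := ((((hx.pow 2).const_mul 27).mul ((hx.const_add 1).pow 2))).div
    ((((hx.const_add 1).add (hx.pow 2)).pow 3).const_mul 4)
    (by simp only [Pi.add_apply, Pi.pow_apply]; positivity)
  refine h.congr_deriv ?_
  simp
  field_simp
  ring

lemma alpha_deriv (p : ℝ) (hp0 : -(1/2) < p) (hp1 : p < 1) :
    HasDerivAt αℓ (-6 * p ^ 2 / ((1 - p) ^ 2 * (1 + p) ^ 4)) p := by
  have hq : 1 - p ≠ 0 := by linarith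
  have hq2 : 1 + p ≠ 0 := by linarith
  have hq3 : 1 - p ^ 2 ≠ 0 := by nlinarith
  have hx := hasDerivAt_id' p
  have h := (((hx.pow 3).mul (hx.const_add 2)).neg).div
    (((hx.pow 2).const_sub 1).mul ((hx.const_add 1).pow 2))
    (by simp only [Pi.mul_apply, Pi.pow_apply]; positivity)
  refine h.congr_deriv ?_
  simp
  field_simp
  ring

/-- logarithmic derivative of `γℓ` -/
noncomputable def lg (p : ℝ) : ℝ :=
  (1 + 2 * p) / (1 + p + p ^ 2) - 1 / (1 + p) + p / ((1 - p) * (1 + p))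

lemma gamma_deriv (p : ℝ) (hp0 : -(1/2) < p) (hp1 : p < 1) :
    HasDerivAt γℓ (γℓ p * lg p) p := by
  have hq : 1 - p ≠ 0 := by linarith
  have hq2 : 1 + p ≠ 0 := by linarith
  have hq4 : 1 + p + p ^ 2 ≠ 0 := by nlinarith
  have hq3 : 0 < 1 - p ^ 2 := by nlinarith
  have hs0 : 0 < Real.sqrt (1 - p ^ 2) := Real.sqrt_pos.2 hq3
  have hs2 : Real.sqrt (1 - p ^ 2) ^ 2 = 1 - p ^ 2 := Real.sq_sqrt hq3.le
  have hx := hasDerivAt_id' p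
  have h := ((hx.const_add 1).add (hx.pow 2)).div
    ((hx.const_add 1).mul (((hx.pow 2).const_sub 1).sqrt hq3.ne'))
    (by simp only [Pi.mul_apply, Pi.pow_apply]; positivity)
  refine h.congr_deriv ?_
  simp only [γℓ, lg, Pi.add_apply, Pi.pow_apply, Pi.mul_apply]
  set s := Real.sqrt (1 - p ^ 2)
  have hs4 : (1 - p) = s ^ 2 / (1 + p) := by rw [hs2]; field_simp; ring
  rw [hs4]
  simp
  field_simp
  rw [hs2]
  ring

/-- the coefficient P times the logarithmic derivative of γℓ -/
noncomputable def lc (p : ℝ) : ℝ :=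
  p ^ 2 * (2 + p) * (1 + 2 * p) / (2 * (1 + p + p ^ 2) ^ 3)

/-- `1 / γℓ ^ 2` -/
noncomputable def sc (p : ℝ) : ℝ := (1 + p) ^ 2 * (1 - p ^ 2) / (1 + p + p ^ 2) ^ 2

lemma sc_deriv (p : ℝ) (hp0 : -(1/2) < p) (hp1 : p < 1) :
    HasDerivAt sc (-2 * lg p * sc p) p := by
  have hq : 1 - p ≠ 0 := by linarith
  have hq2 : 1 + p ≠ 0 := by linarith
  have hq4 : 1 + p + p ^ 2 ≠ 0 := by nlinarith
  have hx := hasDerivAt_id' p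
  have h := (((hx.const_add 1).pow 2).mul ((hx.pow 2).const_sub 1)).div
    (((hx.const_add 1).add (hx.pow 2)).pow 2)
    (by simp only [Pi.add_apply, Pi.pow_apply]; positivity)
  refine h.congr_deriv ?_
  simp [lg, sc]
  field_simp
  ring

lemma lc_deriv (p : ℝ) (hp0 : -(1/2) < p) (hp1 : p < 1) :
    HasDerivAt lc (2 / 3 * (2 / 9) *
      (27 / 4 * (p * (1 + p) * ((1 - p) * (2 + p)) * (1 + 2 * p)) / (1 + p + p ^ 2) ^ 4)
      - lc p * lg p - (-6 * p ^ 2 / ((1 - p) ^ 2 * (1 + p) ^ 4)) * sc p / 4) p := by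
  have hq : 1 - p ≠ 0 := by linarith
  have hq2 : 1 + p ≠ 0 := by linarith
  have hq4 : 1 + p + p ^ 2 ≠ 0 := by nlinarith
  have hx := hasDerivAt_id' p
  have h := (((hx.pow 2).mul (hx.const_add 2)).mul ((hx.const_mul 2).const_add 1)).div
    ((((hx.const_add 1).add (hx.pow 2)).pow 3).const_mul 2)
    (by simp only [Pi.add_apply, Pi.pow_apply]; positivity)
  refine h.congr_deriv ?_
  simp [lg, sc, lc]
  field_simp
  ring

lemma const_of_deriv {f : ℝ → ℝ} {a b : ℝ} (h : ∀ x ∈ Set.Ioo a b, HasDerivAt f 0 x)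
    {x y : ℝ} (hx : x ∈ Set.Ioo a b) (hy : y ∈ Set.Ioo a b) : f x = f y := by
  refine isOpen_Ioo.is_const_of_deriv_eq_zero (s := Set.Ioo a b) isPreconnected_Ioo ?_ ?_ hx hy
  · intro z hz
    exact (h z hz).differentiableAt.differentiableWithinAt
  · intro z hz
    exact (h z hz).deriv

/-- Extended validity of the RBBG formula, Pfaff-transformed branch. -/
theorem RBBG_extended_Pfaff (p : ℝ) (hp0 : -(1/2) < p) (hp1 : p < pStarℓ) :
    hyp2F1 (1/3) (2/3) 1 (β p) = γℓ p * hyp2F1 (1/2) (1/2) 1 (αℓ p) := by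
  obtain ⟨D1, Φ1, H1⟩ := hyp_ode (1/3) (2/3) (by norm_num) (by norm_num) (by norm_num)
  obtain ⟨D2, Φ2, H2⟩ := hyp_ode (1/2) (1/2) (by norm_num) (by norm_num) (by norm_num)
  have hpos := hyp_pos (1/3) (2/3) (by norm_num) (by norm_num) (by norm_num)
  have hz1 := hyp_zero (1/3) (2/3)
  have hz2 := hyp_zero (1/2) (1/2)
  generalize hyp2F1 (1/3) (2/3) 1 = F1 at *
  generalize hyp2F1 (1/2) (1/2) 1 = F2 at *
  set b' : ℝ → ℝ := fun p =>
    27 / 4 * (p * (1 + p) * ((1 - p) * (2 + p)) * (1 + 2 * p)) / (1 + p + p ^ 2) ^ 4 with hb'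
  set a' : ℝ → ℝ := fun p => -6 * p ^ 2 / ((1 - p) ^ 2 * (1 + p) ^ 4) with ha'
  have hstar : (0 : ℝ) < pStarℓ := by
    unfold pStarℓ
    have : 1 < Real.sqrt (3 + 2 * Real.sqrt 3) := by
      rw [Real.lt_sqrt (by norm_num)]
      have := Real.sqrt_nonneg 3
      linarith
    linarith
  have h0mem : (0 : ℝ) ∈ Set.Ioo (-(1/2)) pStarℓ := ⟨by norm_num, hstar⟩
  have hpmem : p ∈ Set.Ioo (-(1/2)) pStarℓ := ⟨hp0, hp1⟩
  have hβ0 : β 0 = 0 := by simp [β]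
  have hα0 : αℓ 0 = 0 := by simp [αℓ]
  have hγ0 : γℓ 0 = 1 := by simp [γℓ]
  have hlt : ∀ x ∈ Set.Ioo (-(1/2)) pStarℓ, x < 1 ∧ |β x| < 1 ∧ |αℓ x| < 1 ∧ 0 < F1 (β x) := by
    intro x hx
    obtain ⟨h1, h2⟩ := interval_facts x hx.1 hx.2
    obtain ⟨h3, h4⟩ := beta_bounds x hx.1 h1
    exact ⟨h1, by rwa [abs_of_nonneg h3], alpha_bounds x hx.1 h1 h2, hpos _ h3 h4⟩
  have hu : ∀ x ∈ Set.Ioo (-(1/2)) pStarℓ, HasDerivAt (fun x => F1 (β x)) (D1 (β x) * b' x) x :=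
    fun x hx => (H1 _ (hlt x hx).2.1).1.comp x (beta_deriv x hx.1)
  have hg : ∀ x ∈ Set.Ioo (-(1/2)) pStarℓ, HasDerivAt (fun x => F2 (αℓ x)) (D2 (αℓ x) * a' x) x :=
    fun x hx => (H2 _ (hlt x hx).2.2.1).1.comp x (alpha_deriv x hx.1 (hlt x hx).1)
  have hφ1 : ∀ x ∈ Set.Ioo (-(1/2)) pStarℓ,
      HasDerivAt (fun x => Φ1 (β x)) (1 / 3 * (2 / 3) * F1 (β x) * b' x) x :=
    fun x hx => (H1 _ (hlt x hx).2.1).2.1.comp x (beta_deriv x hx.1)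
  have hφ2 : ∀ x ∈ Set.Ioo (-(1/2)) pStarℓ,
      HasDerivAt (fun x => Φ2 (αℓ x)) (1 / 2 * (1 / 2) * F2 (αℓ x) * a' x) x :=
    fun x hx => (H2 _ (hlt x hx).2.2.1).2.1.comp x (alpha_deriv x hx.1 (hlt x hx).1)
  -- the algebraic relations
  set P : ℝ → ℝ := fun x =>
    x * (2 + x) * (1 + 2 * x) * (1 - x) * (1 + x) / (6 * (1 + x + x ^ 2) ^ 2) with hP
  have r1 : ∀ x ∈ Set.Ioo (-(1/2)) pStarℓ, P x * b' x = 2 / 3 * (β x * (1 - β x)) := by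
    intro x hx
    have hq4 : 1 + x + x ^ 2 ≠ 0 := by nlinarith
    simp only [hP, hb', β]
    field_simp
    ring
  have r2 : ∀ x ∈ Set.Ioo (-(1/2)) pStarℓ, P x * a' x = sc x * (αℓ x * (1 - αℓ x)) := by
    intro x hx
    have hq4 : 1 + x + x ^ 2 ≠ 0 := by nlinarith
    have hq : 1 - x ≠ 0 := by linarith [(hlt x hx).1]
    have hq2 : 1 + x ≠ 0 := by linarith [hx.1]
    have hf : 1 - x ^ 2 = (1 - x) * (1 + x) := by ring
    simp only [hP, ha', αℓ, sc, hf]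
    field_simp
    ring
  have r3 : ∀ x ∈ Set.Ioo (-(1/2)) pStarℓ, P x * lg x = lc x := by
    intro x hx
    have hq4 : 1 + x + x ^ 2 ≠ 0 := by nlinarith
    have hq : 1 - x ≠ 0 := by linarith [(hlt x hx).1]
    have hq2 : 1 + x ≠ 0 := by linarith [hx.1]
    simp only [hP, lg, lc]
    field_simp
    ring
  -- the (weighted) Wronskian
  set W : ℝ → ℝ := fun x => γℓ x * (sc x * F1 (β x) * Φ2 (αℓ x) + lc x * F1 (β x) * F2 (αℓ x)
    - 2 / 3 * F2 (αℓ x) * Φ1 (β x)) with hW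
  have hWd : ∀ x ∈ Set.Ioo (-(1/2)) pStarℓ, HasDerivAt W 0 x := by
    intro x hx
    have hx1 := (hlt x hx).1
    have h := (gamma_deriv x hx.1 hx1).mul (((((sc_deriv x hx.1 hx1).mul (hu x hx)).mul (hφ2 x hx)).add
      (((lc_deriv x hx.1 hx1).mul (hu x hx)).mul (hg x hx))).sub
      (((hg x hx).const_mul (2 / 3)).mul (hφ1 x hx)))
    refine h.congr_deriv ?_
    have e1 := (H1 _ (hlt x hx).2.1).2.2
    have e2 := (H2 _ (hlt x hx).2.2.1).2.2
    have q1 := r1 x hx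
    have q2 := r2 x hx
    have q3 := r3 x hx
    simp only [Pi.add_apply, Pi.mul_apply, Pi.sub_apply]
    rw [show 27 / 4 * (x * (1 + x) * ((1 - x) * (2 + x)) * (1 + 2 * x)) / (1 + x + x ^ 2) ^ 4 = b' x
      from rfl, show -6 * x ^ 2 / ((1 - x) ^ 2 * (1 + x) ^ 4) = a' x from rfl, e1, e2]
    have q1' : 2 / 3 * (β x * (1 - β x) * D1 (β x)) = P x * b' x * D1 (β x) := by rw [q1]; ring
    have q2' : sc x * (αℓ x * (1 - αℓ x) * D2 (αℓ x)) = P x * a' x * D2 (αℓ x) := by rw [q2]; ring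
    rw [← q3]
    linear_combination γℓ x * (-lg x * F1 (β x) + D1 (β x) * b' x) * q2'
      - γℓ x * (lg x * F2 (αℓ x) + D2 (αℓ x) * a' x) * q1'
  have hW0 : ∀ x ∈ Set.Ioo (-(1/2)) pStarℓ, W x = 0 := by
    intro x hx
    rw [const_of_deriv hWd hx h0mem]
    have e1 := (H1 0 (by simp)).2.2
    have e2 := (H2 0 (by simp)).2.2
    simp [hW, hβ0, hα0, e1, e2, lc]
  have hv : ∀ x ∈ Set.Ioo (-(1/2)) pStarℓ,
      HasDerivAt (fun x => γℓ x * F2 (αℓ x) / F1 (β x)) 0 x := by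
    intro x hx
    have hx1 := (hlt x hx).1
    have h := ((gamma_deriv x hx.1 hx1).mul (hg x hx)).div (hu x hx) (hlt x hx).2.2.2.ne'
    refine h.congr_deriv ?_
    simp only [Pi.mul_apply]
    rw [div_eq_zero_iff]
    left
    by_cases hx0 : x = 0
    · subst hx0
      simp [lg, ha', hb']
    · have hPx : P x ≠ 0 := by
        have hq4 : 1 + x + x ^ 2 ≠ 0 := by nlinarith
        have hq : 1 - x ≠ 0 := by linarith
        have hq2 : 1 + x ≠ 0 := by linarith [hx.1]
        have hq3 : 2 + x ≠ 0 := by linarith [hx.1]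
        have hq5 : 1 + 2 * x ≠ 0 := by linarith [hx.1]
        simp only [hP]
        positivity
      apply mul_left_cancel₀ hPx
      rw [mul_zero, ← hW0 x hx]
      simp only [hW]
      rw [(H1 _ (hlt x hx).2.1).2.2, (H2 _ (hlt x hx).2.2.1).2.2, ← r3 x hx]
      linear_combination γℓ x * F1 (β x) * D2 (αℓ x) * r2 x hx
        - γℓ x * F2 (αℓ x) * D1 (β x) * r1 x hx
  have hfin := const_of_deriv hv hpmem h0mem
  simp only [hβ0, hα0, hγ0, hz1, hz2] at hfin
  have hne := (hlt p hpmem).2.2.2.ne'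
  field_simp at hfin
  exact hfin.symm
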